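/- arXiv:1010.4562 — 4 statements merged into one kernel-verified Lean document; each statement's English description precedes it below -/
import Mathlib

section
/- For all integers n, m ≥ 1, the Jacobian determinant J(x,y) = F^{(n)}_x(x,y)·G^{(m)}_y(x,y) - F^{(n)}_y(x,y)·G^{(m)}_x(x,y) ∈ ℤ[x,y] satisfies J(x,y) ≡ 1 (mod 3); that is, the reduction of J modulo 3 is the constant polynomial 1 in 𝔽₃[x,y]. -/
/-!
Modulo `3` the polynomial `f_{x,y}(z)` becomes `z ^ 3 + y`, and `z ^ 3` has zero derivative in
characteristic `3`. Hence for every `p ∈ ℤ[x,y]` and every `n ≥ 1` the gradient of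
`f^n_{x,y}(p)` is congruent to `(0, 1)`, so the gradients of `F^(n)` and `G^(m)` are congruent to
`(-1, 1)` and `(1, 1)`, and the Jacobian to `-1 - 1 = -2 ≡ 1`.
-/

noncomputable section

/-- The polynomial ring `ℤ[x,y]`, with `x = X 0` and `y = X 1`. -/
abbrev Rxy : Type := MvPolynomial (Fin 2) ℤ

/-- The element `x ∈ ℤ[x,y]`. -/
def xP : Rxy := MvPolynomial.X 0

/-- The element `y ∈ ℤ[x,y]`. -/
def yP : Rxy := MvPolynomial.X 1

/-- `f_{x,y}(z) = z^3 - 3x^2 z + y`, as a polynomial in `z` with coefficients in `ℤ[x,y]`. -/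
def fxy : Polynomial Rxy :=
  Polynomial.X ^ 3 - Polynomial.C (3 * xP ^ 2) * Polynomial.X + Polynomial.C yP

/-- The `n`-th iterate `f^n_{x,y}(z)` (in the variable `z`). -/
def fIter : ℕ → Polynomial Rxy
  | 0 => Polynomial.X
  | n + 1 => fxy.comp (fIter n)

/-- `F^(n)(x,y) = f^n_{x,y}(x) - x ∈ ℤ[x,y]`. -/
def F (n : ℕ) : Rxy := (fIter n).eval xP - xP

/-- `G^(m)(x,y) = f^m_{x,y}(-x) + x ∈ ℤ[x,y]`. -/
def G (m : ℕ) : Rxy := (fIter m).eval (-xP) + xP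

/-- The partial derivative `∂/∂x` on `ℤ[x,y]`. -/
def dx : Rxy → Rxy := MvPolynomial.pderiv 0

/-- The partial derivative `∂/∂y` on `ℤ[x,y]`. -/
def dy : Rxy → Rxy := MvPolynomial.pderiv 1

/-- Reduction modulo `3`, as a ring homomorphism `ℤ[x,y] → 𝔽₃[x,y]`. -/
def red : Rxy →+* MvPolynomial (Fin 2) (ZMod 3) :=
  MvPolynomial.map (Int.castRingHom (ZMod 3))

lemma three_eq_zero : (3 : MvPolynomial (Fin 2) (ZMod 3)) = 0 :=
  CharP.cast_eq_zero (MvPolynomial (Fin 2) (ZMod 3)) 3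

lemma eval_fIter_succ (n : ℕ) (p : Rxy) :
    (fIter (n + 1)).eval p =
      (fIter n).eval p ^ 3 - 3 * (xP ^ 2 * (fIter n).eval p) + yP := by
  simp [fIter, fxy, mul_assoc]

/-- Only the summand `y` of `f^n_{x,y}(p)` contributes to a derivation modulo `3`. -/
lemma red_derivation_eval_fIter (D : Derivation ℤ Rxy Rxy) {n : ℕ} (hn : 1 ≤ n) (p : Rxy) :
    red (D ((fIter n).eval p)) = red (D yP) := by
  obtain ⟨k, rfl⟩ := Nat.exists_eq_add_of_le' hn
  have h3 : D 3 = 0 := D.map_natCast 3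
  have hr : red 3 = 0 := (map_ofNat red 3).trans three_eq_zero
  rw [eval_fIter_succ]
  simp [Derivation.leibniz_pow, h3, hr]

/-- For `n, m ≥ 1`, the Jacobian determinant
`J(x,y) = F^(n)_x·G^(m)_y - F^(n)_y·G^(m)_x ∈ ℤ[x,y]` satisfies `J ≡ 1 (mod 3)`:
its reduction modulo 3 is the constant polynomial `1` in `𝔽₃[x,y]`. -/
theorem jacobian_eq_one_mod_three (n m : ℕ) (hn : 1 ≤ n) (hm : 1 ≤ m) :
    MvPolynomial.map (Int.castRingHom (ZMod 3))
      (dx (F n) * dy (G m) - dy (F n) * dx (G m)) = 1 := by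
  change red _ = 1
  have xx : MvPolynomial.pderiv 0 xP = 1 := MvPolynomial.pderiv_X_self 0
  have yy : MvPolynomial.pderiv 1 yP = 1 := MvPolynomial.pderiv_X_self 1
  have xy : MvPolynomial.pderiv 0 yP = 0 := MvPolynomial.pderiv_X_of_ne (by decide)
  have yx : MvPolynomial.pderiv 1 xP = 0 := MvPolynomial.pderiv_X_of_ne (by decide)
  simp only [dx, dy, F, G, map_sub, map_add, map_mul, red_derivation_eval_fIter _ hn,
    red_derivation_eval_fIter _ hm, xx, yy, xy, yx, map_one, map_zero]
  linear_combination -three_eq_zero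
end
end

section
/- Fix integers n, m ≥ 1. Let α, β be elements of an algebraically closed field of characteristic 0 that is an algebra over ℤ_{(3)} (the localization of ℤ at the prime 3), and suppose F^{(n)}(α,β) = 0 and G^{(m)}(α,β) = 0. Then both α and β are integral over ℤ_{(3)}. -/
/-!
The image of `ℤ_(3)` is contained in a valuation ring of `K` missing any prescribed non-integral
element, so it is enough to bound `α` and `β` in every valuation `v` of `K` that is at most `1` on
`ℤ_(3)`. In such a valuation `v 2 = 1`, as `2` is a unit of `ℤ_(3)`.

Put `M = max (v α ^ 3) (v β)` and suppose `M > 1`. Once `v z ≥ M`, the cube dominates in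
`z ^ 3 - 3 α ^ 2 z + β`, so the orbit of `z` never returns to valuation below `M`
(`escape_step`). As `v α < M`, a periodic `α` forces `v (f α) < M`, and likewise for `-α`
(`map_image_lt`). But `f α = β - 2 α ^ 3` and `f (-α) = β + 2 α ^ 3`, with sum `2 β` and
difference `4 α ^ 3`, and `v 2 = 1`; hence `v β < M` and `v α ^ 3 < M`, a contradiction
(`periodic_bound`).
-/

noncomputable section

instance : (Ideal.span {(3 : ℤ)}).IsPrime :=
  (Ideal.span_singleton_prime (by norm_num)).mpr Int.prime_three

/-- `ℤ_(3)`, the localization of `ℤ` at the prime ideal `(3)`. -/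
abbrev Zloc3 : Type := Localization.AtPrime (Ideal.span {(3 : ℤ)})

/-- The specialized cubic `z ↦ z ^ 3 - 3 a ^ 2 z + b`, as a self-map of `K`. -/
def cubicMap {K : Type*} [Field K] (a b z : K) : K := z ^ 3 - 3 * a ^ 2 * z + b

lemma aeval_eval_fIter {K : Type*} [Field K] (a b : K) (p : Rxy) (n : ℕ) :
    MvPolynomial.aeval ![a, b] ((fIter n).eval p) =
      (cubicMap a b)^[n] (MvPolynomial.aeval ![a, b] p) := by
  induction n with
  | zero => simp [fIter]
  | succ n ih =>
    rw [Function.iterate_succ_apply', ← ih]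
    simp [fIter, fxy, cubicMap, xP, yP]

section Valuation

variable {K : Type*} [Field K] {Γ : Type*} [LinearOrderedCommGroupWithZero Γ]

/-- If `v z` is at least the threshold `M`, which bounds `v a` and `v b`, then `z ^ 3` is the strictly dominant
term of `z ^ 3 - 3 a ^ 2 z + b`. -/
lemma escape_step (v : Valuation K Γ) (h3 : v 3 ≤ 1) {a b z : K} {M : Γ} (hM : 1 < M)
    (ha : v a < M) (hb : v b ≤ M) (hz : M ≤ v z) : M ≤ v (cubicMap a b z) := by
  have h1 : 1 < v z := hM.trans_le hz
  have h0 : 0 < v z := zero_lt_one.trans h1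
  have hlt : v z < v z ^ 3 := lt_self_pow₀ h1 (by norm_num)
  have hmid : v (3 * a ^ 2 * z) < v (z ^ 3) := by
    rw [map_mul, map_mul, map_pow, map_pow]
    calc v 3 * v a ^ 2 * v z ≤ 1 * v a ^ 2 * v z := by gcongr
      _ = v a ^ 2 * v z := by rw [one_mul]
      _ < v z ^ 2 * v z := by
        have : v a ^ 2 < v z ^ 2 := pow_lt_pow_left₀ (ha.trans_le hz) zero_le (by norm_num)
        gcongr
      _ = v z ^ 3 := (pow_succ _ _).symm
  have hsub : v (z ^ 3 - 3 * a ^ 2 * z) = v z ^ 3 := by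
    rw [Valuation.map_sub_eq_of_lt_left v hmid, map_pow]
  have hadd : v (cubicMap a b z) = v z ^ 3 := by
    rw [cubicMap, Valuation.map_add_eq_of_lt_left v, hsub]
    rw [hsub]
    exact (hb.trans hz).trans_lt hlt
  rw [hadd]
  exact hz.trans hlt.le

/-- The first image of a periodic point of valuation below the escape threshold `M` is again
below `M`. -/
lemma map_image_lt (v : Valuation K Γ) (h3 : v 3 ≤ 1) {a b c : K} {M : Γ} (hM : 1 < M)
    (ha : v a < M) (hb : v b ≤ M) (hc : v c < M) {n : ℕ} (hn : 1 ≤ n)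
    (hper : (cubicMap a b)^[n] c = c) : v (cubicMap a b c) < M := by
  by_contra! h
  have key : ∀ k, M ≤ v ((cubicMap a b)^[k + 1] c) := by
    intro k
    induction k with
    | zero => simpa using h
    | succ k ih =>
      rw [Function.iterate_succ_apply']
      exact escape_step v h3 hM ha hb ih
  have := key (n - 1)
  rw [Nat.sub_add_cancel hn, hper] at this
  exact this.not_gt hc

lemma periodic_bound (v : Valuation K Γ) (h3 : v 3 ≤ 1) (h2 : v 2 = 1) {a b : K} {n m : ℕ}
    (hn : 1 ≤ n) (hm : 1 ≤ m) (hF : (cubicMap a b)^[n] a = a)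
    (hG : (cubicMap a b)^[m] (-a) = -a) : v a ≤ 1 ∧ v b ≤ 1 := by
  set M := max (v a ^ 3) (v b) with hMdef
  have hb : v b ≤ M := le_max_right _ _
  have ha3 : v a ^ 3 ≤ M := le_max_left _ _
  rcases le_or_gt M 1 with hM | hM
  · exact ⟨(pow_le_one_iff (by norm_num)).1 (ha3.trans hM), hb.trans hM⟩
  exfalso
  have ha : v a < M := by
    rcases le_or_gt (v a) 1 with h | h
    · exact h.trans_lt hM
    · exact (lt_self_pow₀ h (by norm_num)).trans_le ha3
  have h₁ := map_image_lt v h3 hM ha hb ha hn hF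
  have h₂ := map_image_lt v h3 hM ha hb (by rwa [Valuation.map_neg]) hm hG
  have hb' : v b < M := by
    have e : cubicMap a b a + cubicMap a b (-a) = 2 * b := by unfold cubicMap; ring
    have := v.map_add_lt h₁ h₂
    rwa [e, map_mul, h2, one_mul] at this
  have ha' : v a ^ 3 < M := by
    have e : cubicMap a b (-a) - cubicMap a b a = 2 * 2 * a ^ 3 := by unfold cubicMap; ring
    have := (v.map_sub (cubicMap a b (-a)) (cubicMap a b a)).trans_lt (max_lt h₂ h₁)
    rwa [e, map_mul, map_mul, h2, one_mul, one_mul, map_pow] at this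
  exact lt_irrefl M (max_lt ha' hb')

end Valuation

/-- Valuative criterion for integrality; this holds for any `A`, with no injectivity of the map to
`K`, since the integral closure of `A` in `K` is an integrally closed subring of `K`. -/
lemma isIntegral_of_forall_valuationSubring {A K : Type*} [CommRing A] [Field K] [Algebra A K]
    {x : K} (h : ∀ V : ValuationSubring K, (∀ r : A, algebraMap A K r ∈ V) → x ∈ V) :
    IsIntegral A x := by
  by_contra hx
  have : IsIntegrallyClosedIn (integralClosure A K).toSubring K :=
    inferInstanceAs (IsIntegrallyClosedIn (integralClosure A K) K)
  obtain ⟨V, hV, hxV⟩ := Subring.exists_le_valuationSubring_of_isIntegrallyClosedIn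
    (R := (integralClosure A K).toSubring) (x := x) hx
  exact hxV (h V fun r ↦ hV (show IsIntegral A _ from isIntegral_algebraMap))

lemma isUnit_two_Zloc3 : IsUnit (2 : Zloc3) := by
  have h := IsLocalization.map_units Zloc3
    (⟨2, by
      change (2 : ℤ) ∉ Ideal.span {(3 : ℤ)}
      rw [Ideal.mem_span_singleton]
      norm_num⟩ : (Ideal.span {(3 : ℤ)}).primeCompl)
  simpa using h

/-- Fix `n, m ≥ 1`. If `α, β` lie in an algebraically closed field of characteristic `0`
that is a `ℤ_(3)`-algebra, and `F^(n)(α,β) = 0 = G^(m)(α,β)`, then `α` and `β` are both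
integral over `ℤ_(3)` (i.e. they are `3`-adically integral). -/
theorem solutions_three_adically_integral (n m : ℕ) (hn : 1 ≤ n) (hm : 1 ≤ m)
    {K : Type*} [Field K] [IsAlgClosed K] [CharZero K] [Algebra Zloc3 K] (α β : K)
    (hF : MvPolynomial.aeval ![α, β] (F n) = 0)
    (hG : MvPolynomial.aeval ![α, β] (G m) = 0) :
    IsIntegral Zloc3 α ∧ IsIntegral Zloc3 β := by
  have hF' : (cubicMap α β)^[n] α = α := by
    rw [F, map_sub, aeval_eval_fIter] at hF
    simpa [xP, sub_eq_zero] using hF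
  have hG' : (cubicMap α β)^[m] (-α) = -α := by
    rw [G, map_add, aeval_eval_fIter] at hG
    simpa [xP, add_eq_zero_iff_eq_neg] using hG
  have key : ∀ V : ValuationSubring K, (∀ r : Zloc3, algebraMap Zloc3 K r ∈ V) →
      α ∈ V ∧ β ∈ V := by
    intro V hV
    have hle : ∀ r : Zloc3, V.valuation (algebraMap Zloc3 K r) ≤ 1 :=
      fun r ↦ (V.valuation_le_one_iff _).2 (hV r)
    have h3 : V.valuation 3 ≤ 1 := by simp
    have h2 : V.valuation 2 = 1 := by
      obtain ⟨u, hu⟩ := isUnit_two_Zloc3.exists_right_inv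
      have hmul : V.valuation 2 * V.valuation (algebraMap Zloc3 K u) = 1 := by
        rw [← map_mul, ← map_ofNat (algebraMap Zloc3 K) 2, ← map_mul, hu, map_one, map_one]
      refine le_antisymm (by simp) ?_
      calc (1 : V.ValueGroup) = V.valuation 2 * V.valuation (algebraMap Zloc3 K u) := hmul.symm
        _ ≤ V.valuation 2 := mul_le_of_le_one_right' (hle u)
    have := periodic_bound V.valuation h3 h2 hn hm hF' hG'
    simpa only [V.valuation_le_one_iff] using this
  exact ⟨isIntegral_of_forall_valuationSubring fun V hV ↦ (key V hV).1,
    isIntegral_of_forall_valuationSubring fun V hV ↦ (key V hV).2⟩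
end
end

section
/- For all integers n, m ≥ 1, the Jacobian determinant F^{(n,1)}_x(x,y)·G^{(m)}_y(x,y) - F^{(n,1)}_y(x,y)·G^{(m)}_x(x,y) ∈ ℤ[x,y] is congruent to 1 modulo 3, i.e., its reduction in 𝔽₃[x,y] is the constant polynomial 1. -/
/-!
Write `w = f^{n-1}_{x,y}(a)`, so that `f^n_{x,y}(a) = w^3 - 3x^2 w + y`. Any derivation kills the
first two terms modulo 3, since both `D (w^3) = 3w^2 D w` and `D (3x^2 w)` are divisible by 3;
hence `D (f^n_{x,y}(a)) ≡ D y` for every `n ≥ 1` (`derivation_eval_fIter`). Taking `a = x` and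
`a = -x`, the Jacobian matrix of `(F^(n,1), G^(m))` is congruent to `[[2, 1], [1, 1]]` modulo 3,
whose determinant is 1.
-/

noncomputable section

/-- `F^(n,1)(x,y) = f^n_{x,y}(x) + 2x ∈ ℤ[x,y]`. -/
def F1 (n : ℕ) : Rxy := (fIter n).eval xP + 2 * xP

/-- Modulo 3, differentiating `f^n_{x,y}(a)` for `n ≥ 1` leaves only the derivative of `y`. -/
lemma derivation_eval_fIter (D : Derivation ℤ Rxy Rxy) (a : Rxy) {n : ℕ} (hn : 1 ≤ n) :
    ∃ c : Rxy, D ((fIter n).eval a) = D yP + 3 * c := by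
  obtain ⟨k, rfl⟩ := Nat.exists_eq_add_of_le' hn
  obtain ⟨w, hw⟩ : ∃ w, w = (fIter k).eval a := ⟨_, rfl⟩
  have h : (fIter (k + 1)).eval a = w ^ 3 + 3 * -(xP ^ 2 * w) + yP := by
    simp only [fIter, fxy, Polynomial.eval_comp, Polynomial.eval_add, Polynomial.eval_sub,
      Polynomial.eval_pow, Polynomial.eval_mul, Polynomial.eval_X, Polynomial.eval_C, ← hw]
    ring
  have h3 : D (3 : Rxy) = 0 := by
    simpa using D.map_natCast 3
  refine ⟨w ^ 2 * D w + D (-(xP ^ 2 * w)), ?_⟩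
  rw [h, map_add, map_add, D.leibniz_pow, D.leibniz 3, h3]
  simp only [smul_eq_mul, nsmul_eq_mul]
  push_cast
  ring

/-- For `n, m ≥ 1`, the Jacobian determinant
`F^(n,1)_x·G^(m)_y - F^(n,1)_y·G^(m)_x ∈ ℤ[x,y]` is congruent to `1` modulo `3`:
its reduction in `𝔽₃[x,y]` is the constant polynomial `1`. -/
theorem jacobian_F1_G_eq_one_mod_three (n m : ℕ) (hn : 1 ≤ n) (hm : 1 ≤ m) :
    MvPolynomial.map (Int.castRingHom (ZMod 3))
      (dx (F1 n) * dy (G m) - dy (F1 n) * dx (G m)) = 1 := by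
  have hx1 : MvPolynomial.pderiv 0 xP = (1 : Rxy) := MvPolynomial.pderiv_X_self 0
  have hx0 : MvPolynomial.pderiv 1 xP = (0 : Rxy) := MvPolynomial.pderiv_X_of_ne (by decide)
  have hy1 : MvPolynomial.pderiv 1 yP = (1 : Rxy) := MvPolynomial.pderiv_X_self 1
  have hy0 : MvPolynomial.pderiv 0 yP = (0 : Rxy) := MvPolynomial.pderiv_X_of_ne (by decide)
  obtain ⟨a, ha⟩ := derivation_eval_fIter (MvPolynomial.pderiv 0) xP hn
  obtain ⟨b, hb⟩ := derivation_eval_fIter (MvPolynomial.pderiv 1) xP hn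
  obtain ⟨c, hc⟩ := derivation_eval_fIter (MvPolynomial.pderiv 0) (-xP) hm
  obtain ⟨d, hd⟩ := derivation_eval_fIter (MvPolynomial.pderiv 1) (-xP) hm
  have hF : F1 n = (fIter n).eval xP + (xP + xP) := by rw [F1, two_mul]
  have h3 : (3 : MvPolynomial (Fin 2) (ZMod 3)) = 0 := by
    exact_mod_cast CharP.cast_eq_zero (MvPolynomial (Fin 2) (ZMod 3)) 3
  simp only [dx, dy, hF, G, map_add, ha, hb, hc, hd, hx0, hx1, hy0, hy1, map_sub, map_mul,
    map_one, map_zero, map_ofNat, h3]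
  ring
end
end

section
/- For all integers n, m ≥ 1, the Jacobian determinant F^{(n,1)}_x(x,y)·G^{(m,1)}_y(x,y) - F^{(n,1)}_y(x,y)·G^{(m,1)}_x(x,y) ∈ ℤ[x,y] is congruent to 1 modulo 3, i.e., its reduction in 𝔽₃[x,y] is the constant polynomial 1. -/
/-!
Modulo `3` the map `f_{x,y}(z)` becomes `z ^ 3 + y`, and the derivative of a cube vanishes.
Hence for any `w ∈ ℤ[x,y]` each partial derivative of `f_{x,y}(w)` agrees modulo `3` with that of
`y` (`pderiv_eval_fIter_succ`), whatever the starting point of the orbit is. So the Jacobian matrix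
of `(F^(n,1), G^(m,1))` reduces to `!![2, 1; -2, 1]`, whose determinant is `4 = 1` in `𝔽₃`.
-/

noncomputable section

/-- `G^(m,1)(x,y) = f^m_{x,y}(-x) - 2x ∈ ℤ[x,y]` (note `G^(m,1)(x,y) = F^(m,1)(-x,y)`). -/
def G1 (m : ℕ) : Rxy := (fIter m).eval (-xP) - 2 * xP

/-- Every partial derivative of `f^(n+1)_{x,y}(a)` is congruent modulo `3` to that of `y`,
for an arbitrary starting point `a ∈ ℤ[x,y]`. -/
lemma pderiv_eval_fIter_succ (i : Fin 2) (a : Rxy) (n : ℕ) :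
    ∃ k : Rxy, MvPolynomial.pderiv i ((fIter (n + 1)).eval a) =
      3 * k + MvPolynomial.pderiv i yP := by
  set w := (fIter n).eval a with hw
  have h : (fIter (n + 1)).eval a = w ^ 3 - 3 * (xP ^ 2 * w) + yP := by
    simp only [fIter, fxy, Polynomial.eval_comp, Polynomial.eval_add, Polynomial.eval_sub,
      Polynomial.eval_mul, Polynomial.eval_pow, Polynomial.eval_X, Polynomial.eval_C, ← hw]
    ring
  have h3 : MvPolynomial.pderiv i (3 : Rxy) = 0 := MvPolynomial.pderiv_C (a := 3)
  refine ⟨w ^ 2 * MvPolynomial.pderiv i w - MvPolynomial.pderiv i (xP ^ 2 * w), ?_⟩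
  rw [h, map_add, map_sub, Derivation.leibniz_pow, Derivation.leibniz, h3]
  simp only [smul_eq_mul, nsmul_eq_mul]
  push_cast
  ring

/-- For `n, m ≥ 1`, the Jacobian determinant
`F^(n,1)_x·G^(m,1)_y - F^(n,1)_y·G^(m,1)_x ∈ ℤ[x,y]` is congruent to `1` modulo `3`:
its reduction in `𝔽₃[x,y]` is the constant polynomial `1`. -/
theorem jacobian_F1_G1_eq_one_mod_three (n m : ℕ) (hn : 1 ≤ n) (hm : 1 ≤ m) :
    MvPolynomial.map (Int.castRingHom (ZMod 3))
      (dx (F1 n) * dy (G1 m) - dy (F1 n) * dx (G1 m)) = 1 := by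
  obtain ⟨n, rfl⟩ := Nat.exists_eq_add_of_le' hn
  obtain ⟨m, rfl⟩ := Nat.exists_eq_add_of_le' hm
  obtain ⟨a, ha⟩ := pderiv_eval_fIter_succ 0 xP n
  obtain ⟨b, hb⟩ := pderiv_eval_fIter_succ 1 xP n
  obtain ⟨c, hc⟩ := pderiv_eval_fIter_succ 0 (-xP) m
  obtain ⟨d, hd⟩ := pderiv_eval_fIter_succ 1 (-xP) m
  have h2 (i : Fin 2) : MvPolynomial.pderiv i (2 : Rxy) = 0 := MvPolynomial.pderiv_C (a := 2)
  have hxx : MvPolynomial.pderiv 0 xP = 1 := MvPolynomial.pderiv_X_self 0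
  have hyy : MvPolynomial.pderiv 1 yP = 1 := MvPolynomial.pderiv_X_self 1
  have hxy : MvPolynomial.pderiv 1 xP = 0 := MvPolynomial.pderiv_X_of_ne (by decide)
  have hyx : MvPolynomial.pderiv 0 yP = 0 := MvPolynomial.pderiv_X_of_ne (by decide)
  have h3 : MvPolynomial.map (σ := Fin 2) (Int.castRingHom (ZMod 3)) 3 = 0 := by
    rw [map_ofNat]
    exact_mod_cast CharP.cast_eq_zero (MvPolynomial (Fin 2) (ZMod 3)) 3
  have key : dx (F1 (n + 1)) * dy (G1 (m + 1)) - dy (F1 (n + 1)) * dx (G1 (m + 1)) =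
      3 * ((3 * a + 2) * d + a - (3 * b + 1) * c + 2 * b + 1) + 1 := by
    simp only [dx, dy, F1, G1, map_add, map_sub, ha, hb, hc, hd, Derivation.leibniz, h2, hxx, hxy,
      hyx, hyy, smul_eq_mul]
    ring
  rw [key, map_add, map_mul, h3, zero_mul, zero_add, map_one]
end
end
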